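/- In the abstract hybrid-dimensional variational setting, for every ξ ∈ (1/2, 1] the bilinear form a_ξ is coercive on V with constant min(λ̲, τ̲): for all v ∈ V, a_ξ(v, v) ≥ min(λ̲, τ̲)·‖v‖_V². -/

import Mathlib

open scoped BigOperators RealInnerProductSpace

/-!
On the diagonal the coupling of one fracture with jumps `p`, `m` equals
`(2ξ-1) (⟪T p, p⟫ + ⟪T m, m⟫) + (1-ξ) ⟪T (p + m), p + m⟫`, because the cross terms occur only as
`⟪T p, m⟫ + ⟪T m, p⟫`, which completes to `⟪T (p + m), p + m⟫`. For `ξ ≤ 1` the last summand is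
nonnegative, and the factor `2ξ-1` cancels the weight `(2ξ-1)⁻¹` of the coupling, so the
coercivity constant is independent of `ξ`.
-/

section JumpForm

variable {E : Type*} [SeminormedAddCommGroup E] [InnerProductSpace ℝ E]

/-- The coupling form of a single fracture with transmissibility `T`, on pairs of one-sided jumps
`(J⁺, J⁻)`, before division by `2ξ-1`. -/
noncomputable def jumpForm (T : E →ₗ[ℝ] E) (ξ : ℝ) : LinearMap.BilinForm ℝ (E × E) :=
  (innerₗ E).compl₁₂ (T ∘ₗ (ξ • .fst ℝ E E + (1 - ξ) • .snd ℝ E E)) (.fst ℝ E E) +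
    (innerₗ E).compl₁₂ (T ∘ₗ (ξ • .snd ℝ E E + (1 - ξ) • .fst ℝ E E)) (.snd ℝ E E)

lemma jumpForm_apply (T : E →ₗ[ℝ] E) (ξ : ℝ) (x y : E × E) :
    jumpForm T ξ x y =
      ⟪T (ξ • x.1 + (1 - ξ) • x.2), y.1⟫ + ⟪T (ξ • x.2 + (1 - ξ) • x.1), y.2⟫ :=
  rfl

lemma jumpForm_self (T : E →ₗ[ℝ] E) (ξ : ℝ) (x : E × E) :
    jumpForm T ξ x x =
      (2 * ξ - 1) * (⟪T x.1, x.1⟫ + ⟪T x.2, x.2⟫) + (1 - ξ) * ⟪T (x.1 + x.2), x.1 + x.2⟫ := by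
  simp only [jumpForm_apply, map_add, map_smul, inner_add_left, inner_add_right,
    real_inner_smul_left]
  ring

lemma le_jumpForm_self {T : E →ₗ[ℝ] E} {tau ξ : ℝ} (htau : 0 ≤ tau)
    (hT : ∀ z, tau * ‖z‖ ^ 2 ≤ ⟪T z, z⟫) (hξ : 1 / 2 ≤ ξ) (hξ1 : ξ ≤ 1) (x : E × E) :
    (2 * ξ - 1) * (tau * (‖x.1‖ ^ 2 + ‖x.2‖ ^ 2)) ≤ jumpForm T ξ x x := by
  have hsum : 0 ≤ ⟪T (x.1 + x.2), x.1 + x.2⟫ := le_trans (by positivity) (hT (x.1 + x.2))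
  calc (2 * ξ - 1) * (tau * (‖x.1‖ ^ 2 + ‖x.2‖ ^ 2))
      ≤ (2 * ξ - 1) * (⟪T x.1, x.1⟫ + ⟪T x.2, x.2⟫) :=
        mul_le_mul_of_nonneg_left (by linarith [hT x.1, hT x.2]) (by linarith)
    _ ≤ (2 * ξ - 1) * (⟪T x.1, x.1⟫ + ⟪T x.2, x.2⟫)
          + (1 - ξ) * ⟪T (x.1 + x.2), x.1 + x.2⟫ :=
        le_add_of_nonneg_right (mul_nonneg (by linarith) hsum)
    _ = jumpForm T ξ x x := (jumpForm_self T ξ x).symm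

end JumpForm

section HybridForm

variable {V Hm Hf ι : Type*} [Fintype ι] {K : ι → Type*}
  [SeminormedAddCommGroup Hm] [InnerProductSpace ℝ Hm]
  [SeminormedAddCommGroup Hf] [InnerProductSpace ℝ Hf]
  [∀ i, SeminormedAddCommGroup (K i)] [∀ i, InnerProductSpace ℝ (K i)]

section Module

variable [AddCommGroup V] [Module ℝ V]

/-- The bilinear form `a_ξ` of the hybrid-dimensional Darcy model, with matrix and tangential
fracture gradients `Gm`, `Gf`, permeabilities `Am`, `Af`, one-sided jumps `Jp`, `Jm` and
transmissibilities `T`. At `ξ = 1/2` the junk value `0⁻¹ = 0` removes the coupling. -/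
noncomputable def hybridForm (Gm : V →ₗ[ℝ] Hm) (Gf : V →ₗ[ℝ] Hf) (Jp Jm : ∀ i, V →ₗ[ℝ] K i)
    (Am : Hm →ₗ[ℝ] Hm) (Af : Hf →ₗ[ℝ] Hf) (T : ∀ i, K i →ₗ[ℝ] K i) (ξ : ℝ) :
    LinearMap.BilinForm ℝ V :=
  (innerₗ Hm).compl₁₂ (Am ∘ₗ Gm) Gm + (innerₗ Hf).compl₁₂ (Af ∘ₗ Gf) Gf +
    (2 * ξ - 1)⁻¹ •
      ∑ i, (jumpForm (T i) ξ).compl₁₂ ((Jp i).prod (Jm i)) ((Jp i).prod (Jm i))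

variable (Gm : V →ₗ[ℝ] Hm) (Gf : V →ₗ[ℝ] Hf) (Jp Jm : ∀ i, V →ₗ[ℝ] K i)
  {Am : Hm →ₗ[ℝ] Hm} {Af : Hf →ₗ[ℝ] Hf} {T : ∀ i, K i →ₗ[ℝ] K i} {lam tau ξ : ℝ}

lemma hybridForm_apply (u v : V) :
    hybridForm Gm Gf Jp Jm Am Af T ξ u v =
      ⟪Am (Gm u), Gm v⟫ + ⟪Af (Gf u), Gf v⟫ +
        (2 * ξ - 1)⁻¹ * ∑ i, jumpForm (T i) ξ (Jp i u, Jm i u) (Jp i v, Jm i v) := by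
  simp [hybridForm]

lemma mul_sum_sq_norm_le_inv_mul_sum_jumpForm (htau : 0 ≤ tau)
    (hT : ∀ i z, tau * ‖z‖ ^ 2 ≤ ⟪T i z, z⟫) (hξ : 1 / 2 < ξ) (hξ1 : ξ ≤ 1)
    (x : ∀ i, K i × K i) :
    tau * ∑ i, (‖(x i).1‖ ^ 2 + ‖(x i).2‖ ^ 2) ≤
      (2 * ξ - 1)⁻¹ * ∑ i, jumpForm (T i) ξ (x i) (x i) := by
  rw [le_inv_mul_iff₀ (by linarith), Finset.mul_sum, Finset.mul_sum]
  exact Finset.sum_le_sum fun i _ => le_jumpForm_self htau (hT i) hξ.le hξ1 (x i)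

lemma le_hybridForm_self (htau : 0 ≤ tau)
    (hAm : ∀ x, lam * ‖x‖ ^ 2 ≤ ⟪Am x, x⟫) (hAf : ∀ y, lam * ‖y‖ ^ 2 ≤ ⟪Af y, y⟫)
    (hT : ∀ i z, tau * ‖z‖ ^ 2 ≤ ⟪T i z, z⟫) (hξ : 1 / 2 < ξ) (hξ1 : ξ ≤ 1) (v : V) :
    lam * (‖Gm v‖ ^ 2 + ‖Gf v‖ ^ 2) + tau * ∑ i, (‖Jp i v‖ ^ 2 + ‖Jm i v‖ ^ 2) ≤
      hybridForm Gm Gf Jp Jm Am Af T ξ v v := by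
  rw [hybridForm_apply, mul_add]
  exact add_le_add (add_le_add (hAm _) (hAf _))
    (mul_sum_sq_norm_le_inv_mul_sum_jumpForm htau hT hξ hξ1 fun i => (Jp i v, Jm i v))

end Module

theorem stmt_10_general [SeminormedAddCommGroup V] [Module ℝ V]
    (Gm : V →ₗ[ℝ] Hm) (Gf : V →ₗ[ℝ] Hf) (Jp Jm : ∀ i, V →ₗ[ℝ] K i)
    (hnorm : ∀ v, ‖v‖ ^ 2 = ‖Gm v‖ ^ 2 + ‖Gf v‖ ^ 2 + ∑ i, (‖Jp i v‖ ^ 2 + ‖Jm i v‖ ^ 2))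
    {Am : Hm →ₗ[ℝ] Hm} {Af : Hf →ₗ[ℝ] Hf} {T : ∀ i, K i →ₗ[ℝ] K i} {lam tau ξ : ℝ}
    (htau : 0 ≤ tau)
    (hAm : ∀ x, lam * ‖x‖ ^ 2 ≤ ⟪Am x, x⟫) (hAf : ∀ y, lam * ‖y‖ ^ 2 ≤ ⟪Af y, y⟫)
    (hT : ∀ i z, tau * ‖z‖ ^ 2 ≤ ⟪T i z, z⟫) (hξ : 1 / 2 < ξ) (hξ1 : ξ ≤ 1) (v : V) :
    min lam tau * ‖v‖ ^ 2 ≤ hybridForm Gm Gf Jp Jm Am Af T ξ v v := by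
  calc min lam tau * ‖v‖ ^ 2
      = min lam tau * (‖Gm v‖ ^ 2 + ‖Gf v‖ ^ 2)
          + min lam tau * ∑ i, (‖Jp i v‖ ^ 2 + ‖Jm i v‖ ^ 2) := by rw [hnorm, mul_add]
    _ ≤ lam * (‖Gm v‖ ^ 2 + ‖Gf v‖ ^ 2) + tau * ∑ i, (‖Jp i v‖ ^ 2 + ‖Jm i v‖ ^ 2) := by
        gcongr
        exacts [min_le_left lam tau, min_le_right lam tau]
    _ ≤ hybridForm Gm Gf Jp Jm Am Af T ξ v v :=
        le_hybridForm_self Gm Gf Jp Jm htau hAm hAf hT hξ hξ1 v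

end HybridForm

/-- Abstract hybrid-dimensional variational setting: for every `ξ ∈ (1/2, 1]`
the bilinear form `a_ξ` is coercive on `V` with constant `min(λ̲, τ̲)`. -/
theorem stmt_10
    {V Hm Hf : Type*}
    [NormedAddCommGroup V] [InnerProductSpace ℝ V]
    [NormedAddCommGroup Hm] [InnerProductSpace ℝ Hm]
    [NormedAddCommGroup Hf] [InnerProductSpace ℝ Hf]
    {ι : Type*} [Fintype ι]
    {K : ι → Type*} [∀ i, NormedAddCommGroup (K i)] [∀ i, InnerProductSpace ℝ (K i)]
    (Gm : V →L[ℝ] Hm) (Gf : V →L[ℝ] Hf)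
    (Jp Jm : ∀ i, V →L[ℝ] K i)
    (hnorm : ∀ v : V, ‖v‖ ^ 2 =
      ‖Gm v‖ ^ 2 + ‖Gf v‖ ^ 2 + ∑ i, (‖Jp i v‖ ^ 2 + ‖Jm i v‖ ^ 2))
    (Am : Hm →L[ℝ] Hm) (Af : Hf →L[ℝ] Hf) (T : ∀ i, K i →L[ℝ] K i)
    (hAmsym : ∀ x y : Hm, ⟪Am x, y⟫ = ⟪x, Am y⟫)
    (hAfsym : ∀ x y : Hf, ⟪Af x, y⟫ = ⟪x, Af y⟫)
    (hTsym : ∀ i, ∀ x y : K i, ⟪T i x, y⟫ = ⟪x, T i y⟫)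
    (lam tau : ℝ) (hlam : 0 < lam) (htau : 0 < tau)
    (hAm : ∀ x : Hm, lam * ‖x‖ ^ 2 ≤ ⟪Am x, x⟫)
    (hAf : ∀ y : Hf, lam * ‖y‖ ^ 2 ≤ ⟪Af y, y⟫)
    (hT : ∀ i, ∀ z : K i, tau * ‖z‖ ^ 2 ≤ ⟪T i z, z⟫)
    (ξ : ℝ) (hξ : 1 / 2 < ξ) (hξ1 : ξ ≤ 1)
    (a : V → V → ℝ)
    (ha : ∀ u v : V, a u v =
      ⟪Am (Gm u), Gm v⟫ + ⟪Af (Gf u), Gf v⟫ +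
      (2 * ξ - 1)⁻¹ * ∑ i,
        (⟪T i (ξ • Jp i u + (1 - ξ) • Jm i u), Jp i v⟫ +
         ⟪T i (ξ • Jm i u + (1 - ξ) • Jp i u), Jm i v⟫)) :
    ∀ v : V, min lam tau * ‖v‖ ^ 2 ≤ a v v := by
  intro v
  calc min lam tau * ‖v‖ ^ 2
      ≤ hybridForm (Gm : V →ₗ[ℝ] Hm) (Gf : V →ₗ[ℝ] Hf) (fun i => (Jp i : V →ₗ[ℝ] K i))
          (fun i => (Jm i : V →ₗ[ℝ] K i)) (Am : Hm →ₗ[ℝ] Hm) (Af : Hf →ₗ[ℝ] Hf)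
          (fun i => (T i : K i →ₗ[ℝ] K i)) ξ v v :=
        stmt_10_general _ _ _ _ hnorm htau.le hAm hAf hT hξ hξ1 v
    _ = a v v := by
        simp only [hybridForm_apply, jumpForm_apply, ContinuousLinearMap.coe_coe, ha]
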